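/- Key differential inequalities: if (u, A) is a smooth solution of the YMH equations on U, then pointwise on U one has −(∂₁² + ∂₂²)(F − h) + (|u|²/ε²)·(F − h) ≤ 0 and −(∂₁² + ∂₂²)(−F − h) + (|u|²/ε²)·(−F − h) ≤ 0. -/

import Mathlib

open MeasureTheory Complex

noncomputable section

/-- Partial derivative in the first coordinate direction. -/
def pd1 {E : Type*} [NormedAddCommGroup E] [NormedSpace ℝ E] (f : ℝ × ℝ → E) (x : ℝ × ℝ) : E :=
  fderiv ℝ f x (1, 0)

/-- Partial derivative in the second coordinate direction. -/
def pd2 {E : Type*} [NormedAddCommGroup E] [NormedSpace ℝ E] (f : ℝ × ℝ → E) (x : ℝ × ℝ) : E :=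
  fderiv ℝ f x (0, 1)

/-- First covariant derivative `D₁f = ∂₁f − iA₁f`. -/
def D1 (A1 : ℝ × ℝ → ℝ) (f : ℝ × ℝ → ℂ) (x : ℝ × ℝ) : ℂ :=
  pd1 f x - Complex.I * (A1 x) * f x

/-- Second covariant derivative `D₂f = ∂₂f − iA₂f`. -/
def D2 (A2 : ℝ × ℝ → ℝ) (f : ℝ × ℝ → ℂ) (x : ℝ × ℝ) : ℂ :=
  pd2 f x - Complex.I * (A2 x) * f x

/-- Curvature function `F = ∂₁A₂ − ∂₂A₁`. -/
def curv (A1 A2 : ℝ × ℝ → ℝ) (x : ℝ × ℝ) : ℝ := pd1 A2 x - pd2 A1 x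

/-- `h = (1 − |u|²)/(2ε²)`. -/
def hfun (ε : ℝ) (u : ℝ × ℝ → ℂ) (x : ℝ × ℝ) : ℝ := (1 - ‖u x‖ ^ 2) / (2 * ε ^ 2)

/-- `σ₊ = D₁u + iD₂u`. -/
def sigP (u : ℝ × ℝ → ℂ) (A1 A2 : ℝ × ℝ → ℝ) (x : ℝ × ℝ) : ℂ :=
  D1 A1 u x + Complex.I * D2 A2 u x

/-- `σ₋ = D₁u − iD₂u`. -/
def sigM (u : ℝ × ℝ → ℂ) (A1 A2 : ℝ × ℝ → ℝ) (x : ℝ × ℝ) : ℂ :=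
  D1 A1 u x - Complex.I * D2 A2 u x

/-- The Yang--Mills--Higgs energy over the fundamental domain `[0,1]²`. -/
def energy (ε : ℝ) (u : ℝ × ℝ → ℂ) (A1 A2 : ℝ × ℝ → ℝ) : ℝ :=
  ∫ x in Set.Icc (0:ℝ) 1 ×ˢ Set.Icc (0:ℝ) 1,
    (ε ^ 2 * curv A1 A2 x ^ 2 + ‖D1 A1 u x‖ ^ 2 + ‖D2 A2 u x‖ ^ 2
      + (1 - ‖u x‖ ^ 2) ^ 2 / (4 * ε ^ 2))

/-- `ℤ²`-periodicity. -/
def Periodic2 {E : Type*} (f : ℝ × ℝ → E) : Prop :=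
  ∀ x : ℝ × ℝ, f (x.1 + 1, x.2) = f x ∧ f (x.1, x.2 + 1) = f x

/-- The Yang--Mills--Higgs equations on all of `ℝ²`. -/
def IsYMH (ε : ℝ) (u : ℝ × ℝ → ℂ) (A1 A2 : ℝ × ℝ → ℝ) : Prop :=
  (∀ x, -(D1 A1 (D1 A1 u) x + D2 A2 (D2 A2 u) x) = (hfun ε u x : ℂ) * u x) ∧
  (∀ x, ε ^ 2 * pd2 (curv A1 A2) x = ((starRingEnd ℂ) (u x) * D1 A1 u x).im) ∧
  (∀ x, ε ^ 2 * pd1 (curv A1 A2) x = -((starRingEnd ℂ) (u x) * D2 A2 u x).im)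

/-- The Yang--Mills--Higgs equations on an open set `U ⊆ ℝ²`. -/
def IsYMHOn (ε : ℝ) (u : ℝ × ℝ → ℂ) (A1 A2 : ℝ × ℝ → ℝ) (U : Set (ℝ × ℝ)) : Prop :=
  (∀ x ∈ U, -(D1 A1 (D1 A1 u) x + D2 A2 (D2 A2 u) x) = (hfun ε u x : ℂ) * u x) ∧
  (∀ x ∈ U, ε ^ 2 * pd2 (curv A1 A2) x = ((starRingEnd ℂ) (u x) * D1 A1 u x).im) ∧
  (∀ x ∈ U, ε ^ 2 * pd1 (curv A1 A2) x = -((starRingEnd ℂ) (u x) * D2 A2 u x).im)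

/-- Stability: nonnegative second variation of the energy along all smooth periodic
variations of the section and the connection. -/
def Stable (ε : ℝ) (u : ℝ × ℝ → ℂ) (A1 A2 : ℝ × ℝ → ℝ) : Prop :=
  ∀ v : ℝ × ℝ → ℂ, ∀ a1 a2 : ℝ × ℝ → ℝ,
    ContDiff ℝ (⊤ : ℕ∞) v → Periodic2 v → ContDiff ℝ (⊤ : ℕ∞) a1 → Periodic2 a1 →
    ContDiff ℝ (⊤ : ℕ∞) a2 → Periodic2 a2 →
    0 ≤ iteratedDeriv 2 (fun t : ℝ =>
      energy ε (fun x => u x + t • v x)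
        (fun x => A1 x + t * a1 x) (fun x => A2 x + t * a2 x)) 0

/-!
Metric compatibility of the covariant derivative, `∂ᵥ(conj f · g) = conj (Dᵥf) · g + conj f · Dᵥg`,
turns second derivatives of `|u|²`, and, through the two curvature equations, of `F`, into covariant
derivatives of `u`. With the first YMH equation and `[D₂, D₁]u = iFu` this gives
`ε²Δh = |u|²h − |D₁u|² − |D₂u|²` and `ε²ΔF = |u|²F − 2 Im(conj (D₁u) · D₂u)`.
Completing the square, `−Δ(±F − h) + (|u|²/ε²)(±F − h) = −|σ±|²/ε²`, which is nonpositive.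
-/

open scoped ComplexConjugate Topology

section CovariantDerivative

variable {E : Type*} [NormedAddCommGroup E] [NormedSpace ℝ E]
  {a b : E → ℝ} {f g : E → ℂ} {x : E} {n : WithTop ℕ∞}

/-- The covariant derivative `∂ᵥf − iaf` in the direction `v`, where `a` is the `v`-component of the
connection; `D1 A1` and `D2 A2` are definitionally the cases `v = (1, 0)` and `v = (0, 1)`. -/
def covDeriv (a : E → ℝ) (v : E) (f : E → ℂ) (x : E) : ℂ :=
  fderiv ℝ f x v - I * a x * f x

theorem contDiffAt_fderiv_apply {G : Type*} [NormedAddCommGroup G] [NormedSpace ℝ G] {f : E → G}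
    (hf : ContDiffAt ℝ (n + 1) f x) (v : E) : ContDiffAt ℝ n (fun y => fderiv ℝ f y v) x :=
  hf.fderiv_right_succ.clm_apply contDiffAt_const

theorem contDiffAt_covDeriv (ha : ContDiffAt ℝ n a x) (hf : ContDiffAt ℝ (n + 1) f x) (v : E) :
    ContDiffAt ℝ n (covDeriv a v f) x :=
  (contDiffAt_fderiv_apply hf v).sub
    ((contDiffAt_const.mul (ofRealCLM.contDiff.contDiffAt.comp x ha)).mul
      (hf.of_le le_self_add))

theorem fderiv_covDeriv_apply (ha : DifferentiableAt ℝ a x) (hf : ContDiffAt ℝ 2 f x) (v w : E) :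
    fderiv ℝ (covDeriv a v f) x w =
      fderiv ℝ (fderiv ℝ f) x w v - I * fderiv ℝ a x w * f x - I * a x * fderiv ℝ f x w := by
  have ha' : HasFDerivAt (fun y => (a y : ℂ)) (ofRealCLM.comp (fderiv ℝ a x)) x :=
    ofRealCLM.hasFDerivAt.comp x ha.hasFDerivAt
  have hf' : HasFDerivAt (fderiv ℝ f) (fderiv ℝ (fderiv ℝ f) x) x :=
    ((hf.fderiv_right (m := 1) one_add_one_eq_two.le).differentiableAt one_ne_zero).hasFDerivAt
  have hcov : HasFDerivAt (covDeriv a v f) _ x := (hf'.clm_apply (hasFDerivAt_const v x)).sub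
    ((ha'.const_mul I).mul (hf.differentiableAt two_ne_zero).hasFDerivAt)
  rw [hcov.fderiv]
  simp only [ContinuousLinearMap.comp_zero, zero_add, sub_apply, ContinuousLinearMap.flip_apply,
    add_apply, smul_apply, smul_eq_mul, ContinuousLinearMap.comp_apply, ofRealCLM_apply]
  ring

theorem covDeriv_covDeriv_sub_covDeriv_covDeriv (ha : DifferentiableAt ℝ a x)
    (hb : DifferentiableAt ℝ b x) (hf : ContDiffAt ℝ 2 f x) (v w : E) :
    covDeriv b w (covDeriv a v f) x - covDeriv a v (covDeriv b w f) x =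
      I * (fderiv ℝ b x v - fderiv ℝ a x w : ℝ) * f x := by
  have hsymm : fderiv ℝ (fderiv ℝ f) x w v = fderiv ℝ (fderiv ℝ f) x v w :=
    (hf.isSymmSndFDerivAt (by simp)).eq w v
  have hba : covDeriv b w (covDeriv a v f) x =
      fderiv ℝ (covDeriv a v f) x w - I * b x * covDeriv a v f x := rfl
  have hab : covDeriv a v (covDeriv b w f) x =
      fderiv ℝ (covDeriv b w f) x v - I * a x * covDeriv b w f x := rfl
  rw [hba, hab, fderiv_covDeriv_apply ha hf, fderiv_covDeriv_apply hb hf, hsymm, covDeriv, covDeriv]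
  push_cast
  ring

theorem contDiffAt_conj_mul (hf : ContDiffAt ℝ n f x) (hg : ContDiffAt ℝ n g x) :
    ContDiffAt ℝ n (fun y => conj (f y) * g y) x :=
  (conjCLE.contDiff.contDiffAt.comp x hf).mul hg

-- The right side does not depend on `a`, since multiplication by `i a x` is skew-adjoint.
theorem fderiv_clm_conj_mul_apply {G : Type*} [NormedAddCommGroup G] [NormedSpace ℝ G]
    (L : ℂ →L[ℝ] G) (a : E → ℝ) (hf : DifferentiableAt ℝ f x) (hg : DifferentiableAt ℝ g x)
    (v : E) :
    fderiv ℝ (fun y => L (conj (f y) * g y)) x v =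
      L (conj (covDeriv a v f x) * g x + conj (f x) * covDeriv a v g x) := by
  have hconj : HasFDerivAt (fun y => conj (f y)) ((conjCLE : ℂ →L[ℝ] ℂ).comp (fderiv ℝ f x)) x :=
    (conjCLE : ℂ →L[ℝ] ℂ).hasFDerivAt.comp x hf.hasFDerivAt
  have hmul : HasFDerivAt (fun y => L (conj (f y) * g y)) _ x :=
    L.hasFDerivAt.comp x (hconj.mul hg.hasFDerivAt)
  rw [hmul.fderiv, ContinuousLinearMap.comp_apply]
  congr 1
  simp only [add_apply, smul_apply, smul_eq_mul, ContinuousLinearMap.comp_apply,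
    ContinuousLinearEquiv.coe_coe, ContinuousAlgEquiv.coeCLE_apply, conjCAE_apply, covDeriv,
    map_sub, map_mul, conj_I, conj_ofReal]
  ring

theorem re_conj_mul_self (z : ℂ) : (conj z * z).re = ‖z‖ ^ 2 := by
  rw [conj_mul', ← ofReal_pow, ofReal_re]

theorem fderiv_norm_sq_apply_eq_covDeriv (a : E → ℝ) (hf : DifferentiableAt ℝ f x) (v : E) :
    fderiv ℝ (fun y => ‖f y‖ ^ 2) x v = 2 * (conj (f x) * covDeriv a v f x).re := by
  simp only [← re_conj_mul_self]
  refine (fderiv_clm_conj_mul_apply reCLM a hf hf v).trans ?_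
  simp only [reCLM_apply, add_re, mul_re, conj_re, conj_im]
  ring

theorem fderiv_fderiv_norm_sq_apply_eq_covDeriv (ha : ContDiffAt ℝ 1 a x)
    (hf : ContDiffAt ℝ 2 f x) (v : E) :
    fderiv ℝ (fun y => fderiv ℝ (fun z => ‖f z‖ ^ 2) y v) x v =
      2 * (‖covDeriv a v f x‖ ^ 2 + (conj (f x) * covDeriv a v (covDeriv a v f) x).re) := by
  have hDf : ContDiffAt ℝ 1 (covDeriv a v f) x :=
    contDiffAt_covDeriv (n := 1) ha hf v
  have hgrad : (fun y => fderiv ℝ (fun z => ‖f z‖ ^ 2) y v) =ᶠ[𝓝 x]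
      fun y => ((2 : ℝ) • reCLM) (conj (f y) * covDeriv a v f y) := by
    filter_upwards [hf.eventually (by simp)] with y hy
    exact fderiv_norm_sq_apply_eq_covDeriv a (hy.differentiableAt two_ne_zero) v
  rw [hgrad.fderiv_eq, fderiv_clm_conj_mul_apply _ a (hf.differentiableAt two_ne_zero)
    (hDf.differentiableAt one_ne_zero), ← re_conj_mul_self]
  simp

end CovariantDerivative

section PlaneLaplacian

variable {G : Type*} [NormedAddCommGroup G] [NormedSpace ℝ G] {f g : ℝ × ℝ → G} {x : ℝ × ℝ}

/-- The Laplacian `∂₁² + ∂₂²` on `ℝ²`. Mathlib's Laplacian does not apply: `ℝ × ℝ` carries the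
sup norm and is not an inner product space. -/
def planeLaplacian (f : ℝ × ℝ → G) (x : ℝ × ℝ) : G :=
  pd1 (pd1 f) x + pd2 (pd2 f) x

theorem planeLaplacian_eq_iteratedFDeriv (hf : ContDiffAt ℝ 2 f x) :
    planeLaplacian f x =
      iteratedFDeriv ℝ 2 f x ![(1, 0), (1, 0)] + iteratedFDeriv ℝ 2 f x ![(0, 1), (0, 1)] := by
  have hd : DifferentiableAt ℝ (fderiv ℝ f) x :=
    (hf.fderiv_right (m := 1) one_add_one_eq_two.le).differentiableAt one_ne_zero
  have hdiag (v : ℝ × ℝ) :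
      fderiv ℝ (fun y => fderiv ℝ f y v) x v = iteratedFDeriv ℝ 2 f x ![v, v] := by
    rw [fderiv_clm_apply hd (differentiableAt_const v), iteratedFDeriv_two_apply]
    simp
  exact congrArg₂ (· + ·) (hdiag _) (hdiag _)

theorem planeLaplacian_sub (hf : ContDiffAt ℝ 2 f x) (hg : ContDiffAt ℝ 2 g x) :
    planeLaplacian (fun y => f y - g y) x = planeLaplacian f x - planeLaplacian g x := by
  rw [planeLaplacian_eq_iteratedFDeriv hf, planeLaplacian_eq_iteratedFDeriv hg,
    planeLaplacian_eq_iteratedFDeriv (hf.sub hg), fun_iteratedFDeriv_sub_apply hf hg]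
  simp only [sub_apply]
  abel

theorem planeLaplacian_const_smul (c : ℝ) (hf : ContDiffAt ℝ 2 f x) :
    planeLaplacian (fun y => c • f y) x = c • planeLaplacian f x := by
  rw [planeLaplacian_eq_iteratedFDeriv hf, planeLaplacian_eq_iteratedFDeriv (hf.const_smul c),
    iteratedFDeriv_const_smul_apply' hf]
  simp only [smul_apply, smul_add]

theorem planeLaplacian_const (c : G) (x : ℝ × ℝ) : planeLaplacian (fun _ => c) x = 0 := by
  rw [planeLaplacian_eq_iteratedFDeriv contDiffAt_const, iteratedFDeriv_const_of_ne two_ne_zero]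
  exact add_zero 0

theorem contDiffOn_succ_of_pd {U : Set (ℝ × ℝ)} {n : ℕ∞} (hU : IsOpen U)
    (hf : DifferentiableOn ℝ f U) (h1 : ContDiffOn ℝ n (pd1 f) U) (h2 : ContDiffOn ℝ n (pd2 f) U) :
    ContDiffOn ℝ (n + 1) f U := by
  have hgrad (y : ℝ × ℝ) : fderiv ℝ f y =
      (ContinuousLinearMap.fst ℝ ℝ ℝ).smulRight (pd1 f y) +
        (ContinuousLinearMap.snd ℝ ℝ ℝ).smulRight (pd2 f y) := by
    ext <;> simp [pd1, pd2]
  refine (contDiffOn_succ_iff_fderiv_of_isOpen hU).mpr ⟨hf, by simp, ?_⟩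
  simp only [funext hgrad]
  fun_prop

end PlaneLaplacian

section Regularity

variable {u : ℝ × ℝ → ℂ} {A A1 A2 : ℝ × ℝ → ℝ} {x : ℝ × ℝ} {n : WithTop ℕ∞}

theorem contDiffAt_D1 (hA : ContDiffAt ℝ n A x) (hu : ContDiffAt ℝ (n + 1) u x) :
    ContDiffAt ℝ n (D1 A u) x :=
  contDiffAt_covDeriv hA hu (1, 0)

theorem contDiffAt_D2 (hA : ContDiffAt ℝ n A x) (hu : ContDiffAt ℝ (n + 1) u x) :
    ContDiffAt ℝ n (D2 A u) x :=
  contDiffAt_covDeriv hA hu (0, 1)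

theorem contDiffAt_curv (hA1 : ContDiffAt ℝ (n + 1) A1 x) (hA2 : ContDiffAt ℝ (n + 1) A2 x) :
    ContDiffAt ℝ n (curv A1 A2) x :=
  (contDiffAt_fderiv_apply hA2 (1, 0)).sub (contDiffAt_fderiv_apply hA1 (0, 1))

theorem contDiffAt_hfun (ε : ℝ) (hu : ContDiffAt ℝ n u x) : ContDiffAt ℝ n (hfun ε u) x :=
  (contDiffAt_const.sub (hu.norm_sq ℝ)).div_const _

end Regularity

section YangMillsHiggs

variable {ε : ℝ} {U : Set (ℝ × ℝ)} {u : ℝ × ℝ → ℂ} {A1 A2 : ℝ × ℝ → ℝ} {x : ℝ × ℝ}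

theorem planeLaplacian_norm_sq (hu : ContDiffAt ℝ 2 u x) (hA1 : ContDiffAt ℝ 1 A1 x)
    (hA2 : ContDiffAt ℝ 1 A2 x) :
    planeLaplacian (fun y => ‖u y‖ ^ 2) x =
      2 * (‖D1 A1 u x‖ ^ 2 + ‖D2 A2 u x‖ ^ 2 +
        (conj (u x) * (D1 A1 (D1 A1 u) x + D2 A2 (D2 A2 u) x)).re) := by
  have h1 : pd1 (pd1 fun y => ‖u y‖ ^ 2) x =
      2 * (‖D1 A1 u x‖ ^ 2 + (conj (u x) * D1 A1 (D1 A1 u) x).re) :=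
    fderiv_fderiv_norm_sq_apply_eq_covDeriv hA1 hu (1, 0)
  have h2 : pd2 (pd2 fun y => ‖u y‖ ^ 2) x =
      2 * (‖D2 A2 u x‖ ^ 2 + (conj (u x) * D2 A2 (D2 A2 u) x).re) :=
    fderiv_fderiv_norm_sq_apply_eq_covDeriv hA2 hu (0, 1)
  rw [planeLaplacian, h1, h2, mul_add (conj (u x)), add_re]
  ring

theorem planeLaplacian_hfun (ε : ℝ) (hu : ContDiffAt ℝ 2 u x) :
    planeLaplacian (hfun ε u) x = -planeLaplacian (fun y => ‖u y‖ ^ 2) x / (2 * ε ^ 2) := by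
  have hsmul : hfun ε u = fun y => (2 * ε ^ 2)⁻¹ • (1 - ‖u y‖ ^ 2) := by
    funext y
    rw [hfun, smul_eq_mul, div_eq_inv_mul]
  have hnorm := hu.norm_sq ℝ
  rw [hsmul, planeLaplacian_const_smul _ (contDiffAt_const.sub hnorm),
    planeLaplacian_sub contDiffAt_const hnorm, planeLaplacian_const, smul_eq_mul, zero_sub,
    div_eq_inv_mul]

theorem D2_D1_sub_D1_D2 (hu : ContDiffAt ℝ 2 u x) (hA1 : DifferentiableAt ℝ A1 x)
    (hA2 : DifferentiableAt ℝ A2 x) :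
    D2 A2 (D1 A1 u) x - D1 A1 (D2 A2 u) x = I * curv A1 A2 x * u x :=
  covDeriv_covDeriv_sub_covDeriv_covDeriv hA1 hA2 hu (1, 0) (0, 1)

theorem norm_sq_sigP (u : ℝ × ℝ → ℂ) (A1 A2 : ℝ × ℝ → ℝ) (x : ℝ × ℝ) :
    ‖sigP u A1 A2 x‖ ^ 2 =
      ‖D1 A1 u x‖ ^ 2 + ‖D2 A2 u x‖ ^ 2 - 2 * (conj (D1 A1 u x) * D2 A2 u x).im := by
  simp only [sigP, ← normSq_eq_norm_sq, normSq_apply, add_re, add_im, mul_re, mul_im, I_re, I_im,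
    conj_re, conj_im]
  ring

theorem norm_sq_sigM (u : ℝ × ℝ → ℂ) (A1 A2 : ℝ × ℝ → ℝ) (x : ℝ × ℝ) :
    ‖sigM u A1 A2 x‖ ^ 2 =
      ‖D1 A1 u x‖ ^ 2 + ‖D2 A2 u x‖ ^ 2 + 2 * (conj (D1 A1 u x) * D2 A2 u x).im := by
  simp only [sigM, ← normSq_eq_norm_sq, normSq_apply, sub_re, sub_im, mul_re, mul_im, I_re, I_im,
    conj_re, conj_im]
  ring

namespace IsYMHOn

theorem pd1_curv (h : IsYMHOn ε u A1 A2 U) (hε : ε ≠ 0) (hx : x ∈ U) :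
    pd1 (curv A1 A2) x = (-(ε ^ 2)⁻¹ • imCLM) (conj (u x) * D2 A2 u x) := by
  simp only [smul_apply, imCLM_apply, smul_eq_mul]
  field_simp
  linear_combination h.2.2 x hx

theorem pd2_curv (h : IsYMHOn ε u A1 A2 U) (hε : ε ≠ 0) (hx : x ∈ U) :
    pd2 (curv A1 A2) x = ((ε ^ 2)⁻¹ • imCLM) (conj (u x) * D1 A1 u x) := by
  simp only [smul_apply, imCLM_apply, smul_eq_mul]
  field_simp
  linear_combination h.2.1 x hx

-- `curv A1 A2` is a priori only `C¹`; the equations express its gradient through `C¹` functions.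
theorem contDiffOn_curv (h : IsYMHOn ε u A1 A2 U) (hε : ε ≠ 0) (hU : IsOpen U)
    (hu : ContDiffOn ℝ 2 u U) (hA1 : ContDiffOn ℝ 2 A1 U) (hA2 : ContDiffOn ℝ 2 A2 U) :
    ContDiffOn ℝ 2 (curv A1 A2) U := by
  have hu' {y} (hy : y ∈ U) := hu.contDiffAt (hU.mem_nhds hy)
  have hA1' {y} (hy : y ∈ U) := hA1.contDiffAt (hU.mem_nhds hy)
  have hA2' {y} (hy : y ∈ U) := hA2.contDiffAt (hU.mem_nhds hy)
  have hdiff : DifferentiableOn ℝ (curv A1 A2) U := fun y hy =>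
    ((contDiffAt_curv (n := 1) (hA1' hy) (hA2' hy)).differentiableAt
      one_ne_zero).differentiableWithinAt
  have h1 : ContDiffOn ℝ 1 (pd1 (curv A1 A2)) U := by
    refine ContDiffOn.congr (fun y hy => ContDiffAt.contDiffWithinAt ?_) fun _ => h.pd1_curv hε
    exact (ContinuousLinearMap.contDiff _).contDiffAt.comp y <| contDiffAt_conj_mul
      ((hu' hy).of_le one_le_two) (contDiffAt_D2 ((hA2' hy).of_le one_le_two) (hu' hy))
  have h2 : ContDiffOn ℝ 1 (pd2 (curv A1 A2)) U := by
    refine ContDiffOn.congr (fun y hy => ContDiffAt.contDiffWithinAt ?_) fun _ => h.pd2_curv hε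
    exact (ContinuousLinearMap.contDiff _).contDiffAt.comp y <| contDiffAt_conj_mul
      ((hu' hy).of_le one_le_two) (contDiffAt_D1 ((hA1' hy).of_le one_le_two) (hu' hy))
  exact contDiffOn_succ_of_pd (n := 1) hU hdiff h1 h2

theorem sq_mul_planeLaplacian_hfun (h : IsYMHOn ε u A1 A2 U) (hε : ε ≠ 0) (hx : x ∈ U)
    (hu : ContDiffAt ℝ 2 u x) (hA1 : ContDiffAt ℝ 1 A1 x) (hA2 : ContDiffAt ℝ 1 A2 x) :
    ε ^ 2 * planeLaplacian (hfun ε u) x =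
      ‖u x‖ ^ 2 * hfun ε u x - ‖D1 A1 u x‖ ^ 2 - ‖D2 A2 u x‖ ^ 2 := by
  have hHiggs : D1 A1 (D1 A1 u) x + D2 A2 (D2 A2 u) x = -(hfun ε u x * u x) :=
    neg_eq_iff_eq_neg.mp (h.1 x hx)
  have hre : (conj (u x) * -(hfun ε u x * u x)).re = -(‖u x‖ ^ 2 * hfun ε u x) := by
    rw [← re_conj_mul_self, mul_neg, mul_left_comm, neg_re, re_ofReal_mul, mul_comm]
  rw [planeLaplacian_hfun ε hu, planeLaplacian_norm_sq hu hA1 hA2, hHiggs, hre]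
  field_simp
  ring

theorem pd1_pd1_curv (h : IsYMHOn ε u A1 A2 U) (hε : ε ≠ 0) (hU : IsOpen U) (hx : x ∈ U)
    (hu : ContDiffAt ℝ 2 u x) (hA2 : ContDiffAt ℝ 1 A2 x) :
    pd1 (pd1 (curv A1 A2)) x = (-(ε ^ 2)⁻¹ • imCLM)
      (conj (D1 A1 u x) * D2 A2 u x + conj (u x) * D1 A1 (D2 A2 u) x) := by
  have hpd : pd1 (curv A1 A2) =ᶠ[𝓝 x] _ :=
    Filter.eventuallyEq_of_mem (hU.mem_nhds hx) fun _ => h.pd1_curv hε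
  rw [pd1, hpd.fderiv_eq]
  exact fderiv_clm_conj_mul_apply _ A1 (hu.differentiableAt two_ne_zero)
    ((contDiffAt_D2 (n := 1) hA2 hu).differentiableAt one_ne_zero) (1, 0)

theorem pd2_pd2_curv (h : IsYMHOn ε u A1 A2 U) (hε : ε ≠ 0) (hU : IsOpen U) (hx : x ∈ U)
    (hu : ContDiffAt ℝ 2 u x) (hA1 : ContDiffAt ℝ 1 A1 x) :
    pd2 (pd2 (curv A1 A2)) x = ((ε ^ 2)⁻¹ • imCLM)
      (conj (D2 A2 u x) * D1 A1 u x + conj (u x) * D2 A2 (D1 A1 u) x) := by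
  have hpd : pd2 (curv A1 A2) =ᶠ[𝓝 x] _ :=
    Filter.eventuallyEq_of_mem (hU.mem_nhds hx) fun _ => h.pd2_curv hε
  rw [pd2, hpd.fderiv_eq]
  exact fderiv_clm_conj_mul_apply _ A2 (hu.differentiableAt two_ne_zero)
    ((contDiffAt_D1 (n := 1) hA1 hu).differentiableAt one_ne_zero) (0, 1)

theorem sq_mul_planeLaplacian_curv (h : IsYMHOn ε u A1 A2 U) (hε : ε ≠ 0) (hU : IsOpen U)
    (hx : x ∈ U) (hu : ContDiffAt ℝ 2 u x) (hA1 : ContDiffAt ℝ 1 A1 x)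
    (hA2 : ContDiffAt ℝ 1 A2 x) :
    ε ^ 2 * planeLaplacian (curv A1 A2) x =
      ‖u x‖ ^ 2 * curv A1 A2 x - 2 * (conj (D1 A1 u x) * D2 A2 u x).im := by
  have hcomm : D2 A2 (D1 A1 u) x = D1 A1 (D2 A2 u) x + I * curv A1 A2 x * u x :=
    sub_eq_iff_eq_add'.mp <| D2_D1_sub_D1_D2 hu (hA1.differentiableAt one_ne_zero)
      (hA2.differentiableAt one_ne_zero)
  have hswap : (conj (D2 A2 u x) * D1 A1 u x).im = -(conj (D1 A1 u x) * D2 A2 u x).im := by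
    rw [← conj_im, map_mul, conj_conj, mul_comm]
  have hmass : (conj (u x) * (I * curv A1 A2 x * u x)).im = ‖u x‖ ^ 2 * curv A1 A2 x := by
    have hreassoc : conj (u x) * (I * curv A1 A2 x * u x) =
        curv A1 A2 x * (I * (conj (u x) * u x)) := by ring
    rw [hreassoc, im_ofReal_mul, I_mul_im, re_conj_mul_self, mul_comm]
  rw [planeLaplacian, h.pd1_pd1_curv hε hU hx hu hA2, h.pd2_pd2_curv hε hU hx hu hA1, hcomm]
  simp only [smul_apply, smul_eq_mul, imCLM_apply, mul_add (conj (u x)), add_im, hswap, hmass]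
  field_simp
  ring

theorem neg_planeLaplacian_mul_curv_sub_hfun_add (h : IsYMHOn ε u A1 A2 U) (hε : ε ≠ 0)
    (hU : IsOpen U) (hu : ContDiffOn ℝ 2 u U) (hA1 : ContDiffOn ℝ 2 A1 U)
    (hA2 : ContDiffOn ℝ 2 A2 U) (hx : x ∈ U) (c : ℝ) :
    -planeLaplacian (fun y => c * curv A1 A2 y - hfun ε u y) x +
        ‖u x‖ ^ 2 / ε ^ 2 * (c * curv A1 A2 x - hfun ε u x) =
      -((‖D1 A1 u x‖ ^ 2 + ‖D2 A2 u x‖ ^ 2 -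
        2 * c * (conj (D1 A1 u x) * D2 A2 u x).im) / ε ^ 2) := by
  have hnhds := hU.mem_nhds hx
  have hux := hu.contDiffAt hnhds
  have hA1x := (hA1.contDiffAt hnhds).of_le one_le_two
  have hA2x := (hA2.contDiffAt hnhds).of_le one_le_two
  have hFx := (h.contDiffOn_curv hε hU hu hA1 hA2).contDiffAt hnhds
  have hlap : planeLaplacian (fun y => c * curv A1 A2 y - hfun ε u y) x =
      c * planeLaplacian (curv A1 A2) x - planeLaplacian (hfun ε u) x := by
    rw [planeLaplacian_sub (contDiffAt_const.mul hFx) (contDiffAt_hfun ε hux)]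
    exact congrArg (· - _) (planeLaplacian_const_smul c hFx)
  rw [hlap]
  field_simp
  linear_combination -c * h.sq_mul_planeLaplacian_curv hε hU hx hux hA1x hA2x +
    h.sq_mul_planeLaplacian_hfun hε hx hux hA1x hA2x

theorem neg_planeLaplacian_curv_sub_hfun_add (h : IsYMHOn ε u A1 A2 U) (hε : ε ≠ 0) (hU : IsOpen U)
    (hu : ContDiffOn ℝ 2 u U) (hA1 : ContDiffOn ℝ 2 A1 U) (hA2 : ContDiffOn ℝ 2 A2 U)
    (hx : x ∈ U) :
    -planeLaplacian (fun y => curv A1 A2 y - hfun ε u y) x +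
        ‖u x‖ ^ 2 / ε ^ 2 * (curv A1 A2 x - hfun ε u x) = -(‖sigP u A1 A2 x‖ ^ 2 / ε ^ 2) := by
  simpa [norm_sq_sigP] using h.neg_planeLaplacian_mul_curv_sub_hfun_add hε hU hu hA1 hA2 hx 1

theorem neg_planeLaplacian_neg_curv_sub_hfun_add (h : IsYMHOn ε u A1 A2 U) (hε : ε ≠ 0)
    (hU : IsOpen U) (hu : ContDiffOn ℝ 2 u U) (hA1 : ContDiffOn ℝ 2 A1 U)
    (hA2 : ContDiffOn ℝ 2 A2 U) (hx : x ∈ U) :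
    -planeLaplacian (fun y => -curv A1 A2 y - hfun ε u y) x +
        ‖u x‖ ^ 2 / ε ^ 2 * (-curv A1 A2 x - hfun ε u x) = -(‖sigM u A1 A2 x‖ ^ 2 / ε ^ 2) := by
  simpa [norm_sq_sigM] using h.neg_planeLaplacian_mul_curv_sub_hfun_add hε hU hu hA1 hA2 hx (-1)

end IsYMHOn

theorem key_differential_inequalities_general (hε : ε ≠ 0) (hU : IsOpen U)
    (hu : ContDiffOn ℝ 2 u U) (hA1 : ContDiffOn ℝ 2 A1 U) (hA2 : ContDiffOn ℝ 2 A2 U)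
    (hYMH : IsYMHOn ε u A1 A2 U) (hx : x ∈ U) :
    -planeLaplacian (fun y => curv A1 A2 y - hfun ε u y) x +
        ‖u x‖ ^ 2 / ε ^ 2 * (curv A1 A2 x - hfun ε u x) ≤ 0 ∧
      -planeLaplacian (fun y => -curv A1 A2 y - hfun ε u y) x +
        ‖u x‖ ^ 2 / ε ^ 2 * (-curv A1 A2 x - hfun ε u x) ≤ 0 := by
  rw [hYMH.neg_planeLaplacian_curv_sub_hfun_add hε hU hu hA1 hA2 hx,
    hYMH.neg_planeLaplacian_neg_curv_sub_hfun_add hε hU hu hA1 hA2 hx]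
  exact ⟨neg_nonpos.mpr (by positivity), neg_nonpos.mpr (by positivity)⟩

end YangMillsHiggs

/-- Key differential inequalities for `F − h` and `−F − h`. -/
theorem key_differential_inequalities
    (ε : ℝ) (hε : 0 < ε) (U : Set (ℝ × ℝ)) (hU : IsOpen U)
    (u : ℝ × ℝ → ℂ) (A1 A2 : ℝ × ℝ → ℝ)
    (hu : ContDiffOn ℝ (⊤ : ℕ∞) u U) (hA1 : ContDiffOn ℝ (⊤ : ℕ∞) A1 U) (hA2 : ContDiffOn ℝ (⊤ : ℕ∞) A2 U)
    (hYMH : IsYMHOn ε u A1 A2 U) :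
    ∀ x ∈ U,
      (-(pd1 (pd1 (fun y => curv A1 A2 y - hfun ε u y)) x
          + pd2 (pd2 (fun y => curv A1 A2 y - hfun ε u y)) x)
        + ‖u x‖ ^ 2 / ε ^ 2 * (curv A1 A2 x - hfun ε u x) ≤ 0) ∧
      (-(pd1 (pd1 (fun y => -curv A1 A2 y - hfun ε u y)) x
          + pd2 (pd2 (fun y => -curv A1 A2 y - hfun ε u y)) x)
        + ‖u x‖ ^ 2 / ε ^ 2 * (-curv A1 A2 x - hfun ε u x) ≤ 0) := by
  have two_le_top : (2 : WithTop ℕ∞) ≤ (⊤ : ℕ∞) := WithTop.coe_le_coe.mpr le_top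
  exact fun x hx => key_differential_inequalities_general hε.ne' hU (hu.of_le two_le_top)
    (hA1.of_le two_le_top) (hA2.of_le two_le_top) hYMH hx
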